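/- Let f=(m,n,k) be an integer binary quadratic form with discriminant Δ=k²−4mn>0 not a perfect square. The period Γ(f) is palindromic and of even length if and only if the class of f is (m+n)-symmetric, i.e., f is SL(2,ℤ)-equivalent to its adjoint (−n,−m,k) but not to its conjugate (m,n,−k). -/

import Mathlib

/-- Iterates of the Gauss map starting from `ξ`. -/
noncomputable def gaussIter (ξ : ℝ) : ℕ → ℝ
  | 0 => ξ
  | n + 1 => 1 / (gaussIter ξ n - (⌊gaussIter ξ n⌋ : ℝ))

/-- The `n`-th partial quotient of the regular continued fraction expansion of `ξ`. -/
noncomputable def cfTerm (ξ : ℝ) (n : ℕ) : ℤ := ⌊gaussIter ξ n⌋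

/-- The continued fraction expansion of `ξ` is periodic with period length `P` from index `N`. -/
def IsEventuallyPeriodicCF (ξ : ℝ) (N P : ℕ) : Prop :=
  1 ≤ P ∧ ∀ j : ℕ, cfTerm ξ (N + j + P) = cfTerm ξ (N + j)

/-- `s` is the (minimal) period of the eventually periodic regular continued fraction
expansion of `ξ`; it is well defined up to cyclic permutation. -/
def IsCFPeriod (s : List ℤ) (ξ : ℝ) : Prop :=
  s ≠ [] ∧
  (∃ N : ℕ, ∀ j : ℕ, cfTerm ξ (N + j) = s.getD (j % s.length) 0) ∧
  (∀ P : ℕ, 1 ≤ P → (∃ N : ℕ, IsEventuallyPeriodicCF ξ N P) → s.length ≤ P)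

/-- The value of the binary quadratic form `f = (m, n, k)`, i.e. `m*x^2 + n*y^2 + k*x*y`. -/
def qval (f : ℤ × ℤ × ℤ) (x y : ℤ) : ℤ := f.1 * x ^ 2 + f.2.1 * y ^ 2 + f.2.2 * x * y

/-- The discriminant `k^2 - 4*m*n` of the form `f = (m, n, k)`. -/
def formDisc (f : ℤ × ℤ × ℤ) : ℤ := f.2.2 ^ 2 - 4 * f.1 * f.2.1

/-- `SL(2,ℤ)`-equivalence of binary quadratic forms. -/
def SLEquiv (f g : ℤ × ℤ × ℤ) : Prop :=
  ∃ a b c d : ℤ, a * d - b * c = 1 ∧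
    ∀ x y : ℤ, qval g x y = qval f (a * x + b * y) (c * x + d * y)

/-- The root with the plus sign of `m*ξ^2 + k*ξ + n = 0`, for `f = (m, n, k)`. -/
noncomputable def xiPlus (f : ℤ × ℤ × ℤ) : ℝ :=
  (-(f.2.2 : ℝ) + Real.sqrt ((formDisc f : ℤ) : ℝ)) / (2 * (f.1 : ℝ))

/-- The root with the minus sign of `m*ξ^2 + k*ξ + n = 0`, for `f = (m, n, k)`. -/
noncomputable def xiMinus (f : ℤ × ℤ × ℤ) : ℝ :=
  (-(f.2.2 : ℝ) - Real.sqrt ((formDisc f : ℤ) : ℝ)) / (2 * (f.1 : ℝ))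

/-- The conjugate `(m, n, -k)` of the form `(m, n, k)`. -/
def conjF (f : ℤ × ℤ × ℤ) : ℤ × ℤ × ℤ := (f.1, f.2.1, -f.2.2)

/-- The adjoint `(-n, -m, k)` of the form `(m, n, k)`. -/
def adjF (f : ℤ × ℤ × ℤ) : ℤ × ℤ × ℤ := (-f.2.1, -f.1, f.2.2)

/-- The antipodal `(-n, -m, -k)` of the form `(m, n, k)`. -/
def antipF (f : ℤ × ℤ × ℤ) : ℤ × ℤ × ℤ := (-f.2.1, -f.1, -f.2.2)

/-- A form `(m, n, k)` is primitive if `gcd(m, n, k) = 1`. -/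
def IsPrimitiveForm (f : ℤ × ℤ × ℤ) : Prop := Int.gcd f.1 (Int.gcd f.2.1 f.2.2) = 1

/-- A finite sequence is palindromic if some cyclic permutation of it equals its reversal. -/
def Palindromic (s : List ℤ) : Prop := ∃ t : List ℤ, List.IsRotated s t ∧ t.reverse = t

/-- A finite sequence is bipalindromic if some cyclic permutation of it is the concatenation
of two palindrome blocks each of odd length. -/
def Bipalindromic (s : List ℤ) : Prop :=
  ∃ u v : List ℤ, List.IsRotated s (u ++ v) ∧ Odd u.length ∧ Odd v.length ∧
    u.reverse = u ∧ v.reverse = v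

/-!
By Serret's theorem two irrational numbers have a common continued fraction tail exactly when they
are related by an integer Möbius transformation of determinant `±1`, and the sign is the parity of
the shift between the two tails. Since `ξ⁺` of the adjoint is `-1 / ξ⁻` and `ξ⁺` of the conjugate is
`-ξ⁻`, the form is equivalent to its adjoint (to its conjugate) iff `ξ⁺` and `ξ⁻` are related with
determinant `1` (with determinant `-1`).

Far enough along the expansion of `ξ⁺` the transported conjugate is negative, and Galois' theorem
says that its negative inverse has the reversed period. Hence both equivalences are symmetries of
the bi-infinite periodic sequence `b` with period `Γ(f)`: reflections `i ↦ c - i` with `c` odd for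
the adjoint and `c` even for the conjugate. A reflection with `c` odd is a palindromic rotation of
`Γ(f)`. Two reflections compose to a translation, which must be a multiple of the length of the
minimal period; so, once there is a reflection with `c` odd, there is one with `c` even iff that
length is odd.
-/

/-- `x = (a * y + b) / (c * y + d)` for an integer matrix of determinant `e`. The equation is
cleared of its denominator, so that the relation is symmetric and transitive without side
conditions. -/
def MobiusRel (e : ℤˣ) (x y : ℝ) : Prop :=
  ∃ a b c d : ℤ, a * d - b * c = e ∧ x * (c * y + d) = a * y + b

/-- The continued fractions of `x` and `y` have a common tail, starting at positions `p` and `q`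
with `(-1) ^ (p + q) = e`. -/
def TailRel (e : ℤˣ) (x y : ℝ) : Prop :=
  ∃ p q : ℕ, gaussIter x p = gaussIter y q ∧ (-1) ^ (p + q) = e

section Mobius

variable {e e' : ℤˣ} {x y z : ℝ}

theorem MobiusRel.refl (x : ℝ) : MobiusRel 1 x x := ⟨1, 0, 0, 1, by simp, by simp⟩

theorem MobiusRel.symm (h : MobiusRel e x y) : MobiusRel e y x := by
  obtain ⟨a, b, c, d, hdet, h⟩ := h
  refine ⟨-d, b, c, -a, by linear_combination hdet, ?_⟩
  push_cast
  linear_combination h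

theorem MobiusRel.trans (h : MobiusRel e x y) (h' : MobiusRel e' y z) :
    MobiusRel (e * e') x z := by
  obtain ⟨a, b, c, d, hdet, h⟩ := h
  obtain ⟨a', b', c', d', hdet', h'⟩ := h'
  refine ⟨a * a' + b * c', a * b' + b * d', c * a' + d * c', c * b' + d * d', ?_, ?_⟩
  · rw [Units.val_mul, ← hdet, ← hdet']
    ring
  · push_cast
    linear_combination (c' * z + d') * h + (a - x * c) * h'

theorem MobiusRel.congr {e₁ e₂ : ℤˣ} {x₁ y₁ : ℝ} (hx : MobiusRel e₁ x x₁)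
    (hy : MobiusRel e₂ y y₁) : MobiusRel e x y ↔ MobiusRel (e₁ * e * e₂) x₁ y₁ := by
  refine ⟨fun h ↦ (hx.symm.trans h).trans hy, fun h ↦ ?_⟩
  have hsign : e₁ * (e₁ * e * e₂) * e₂ = e := by
    rw [mul_assoc e₁ e, ← mul_assoc, Int.units_mul_self, one_mul, mul_assoc, Int.units_mul_self,
      mul_one]
  exact hsign ▸ (hx.trans h).trans hy.symm

theorem mobiusRel_neg (y : ℝ) : MobiusRel (-1) y (-y) := ⟨-1, 0, 0, 1, by simp, by simp⟩

theorem mobiusRel_neg_inv (hy : y ≠ 0) : MobiusRel 1 y (-y⁻¹) :=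
  ⟨0, -1, 1, 0, by simp, by simp [hy]⟩

theorem mobiusRel_inv_sub_intCast {n : ℤ} (h : y ≠ n) : MobiusRel (-1) y (y - n)⁻¹ := by
  have : y - n ≠ 0 := sub_ne_zero.mpr h
  refine ⟨n, 1, 1, 0, by simp, ?_⟩
  push_cast
  field_simp
  ring

end Mobius

section GaussMap

variable {x y : ℝ}

theorem gaussIter_succ (x : ℝ) (n : ℕ) :
    gaussIter x (n + 1) = (Int.fract (gaussIter x n))⁻¹ := by
  rw [gaussIter, one_div, Int.self_sub_floor]

theorem gaussIter_one (x : ℝ) : gaussIter x 1 = (Int.fract x)⁻¹ := gaussIter_succ x 0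

theorem gaussIter_add (x : ℝ) (p j : ℕ) :
    gaussIter x (p + j) = gaussIter (gaussIter x p) j := by
  induction j with
  | zero => rfl
  | succ j ih => rw [← add_assoc, gaussIter_succ, ih, gaussIter_succ]

theorem cfTerm_gaussIter (x : ℝ) (p j : ℕ) : cfTerm (gaussIter x p) j = cfTerm x (p + j) := by
  rw [cfTerm, cfTerm, gaussIter_add]

theorem fract_pos_of_irrational (hx : Irrational x) : 0 < Int.fract x :=
  Int.fract_pos.mpr (hx.ne_int _)

theorem irrational_gaussIter (hx : Irrational x) (n : ℕ) : Irrational (gaussIter x n) := by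
  induction n with
  | zero => exact hx
  | succ n ih =>
    rw [gaussIter_succ, irrational_inv_iff]
    exact ih.sub_intCast _

theorem one_le_cfTerm_succ (hx : Irrational x) (n : ℕ) : 1 ≤ cfTerm x (n + 1) := by
  have hfract := fract_pos_of_irrational (irrational_gaussIter hx n)
  rw [cfTerm, Int.le_floor, Int.cast_one, gaussIter_succ]
  exact (one_le_inv₀ hfract).mpr (Int.fract_lt_one _).le

theorem convergent_eq_of_cfTerm_eq (h : ∀ j, cfTerm x j = cfTerm y j) (n : ℕ) :
    x.convergent n = y.convergent n := by
  have hfloor : ⌊x⌋ = ⌊y⌋ := h 0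
  induction n generalizing x y with
  | zero => rw [Real.convergent_zero, Real.convergent_zero, hfloor]
  | succ n ih =>
    have htail (j : ℕ) : cfTerm (Int.fract x)⁻¹ j = cfTerm (Int.fract y)⁻¹ j := by
      rw [← gaussIter_one, ← gaussIter_one, cfTerm_gaussIter, cfTerm_gaussIter, h]
    rw [Real.convergent_succ, Real.convergent_succ, hfloor, ih htail (htail 0)]

theorem eq_of_cfTerm_eq (h : ∀ j, cfTerm x j = cfTerm y j) : x = y := by
  have hconvs : (GenContFract.of x).convs = (GenContFract.of y).convs := by
    refine Stream'.ext fun n ↦ ?_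
    change (GenContFract.of x).convs n = (GenContFract.of y).convs n
    rw [Real.convs_eq_convergent, Real.convs_eq_convergent, convergent_eq_of_cfTerm_eq h]
  exact tendsto_nhds_unique (GenContFract.of_convergence x)
    (hconvs ▸ GenContFract.of_convergence y)

theorem gaussIter_eq_gaussIter_iff {p q : ℕ} :
    gaussIter x p = gaussIter y q ↔ ∀ j, cfTerm x (p + j) = cfTerm y (q + j) := by
  simp only [← cfTerm_gaussIter]
  exact ⟨fun h j ↦ by rw [h], eq_of_cfTerm_eq⟩

theorem cfTerm_eq_of_recurrence {X : ℕ → ℝ} {b : ℕ → ℤ} (hrec : ∀ i, X i = b i + (X (i + 1))⁻¹)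
    (hX : ∀ i, 1 < X (i + 1)) (i : ℕ) : cfTerm (X 0) i = b i := by
  have hfract (i : ℕ) : (X (i + 1))⁻¹ ∈ Set.Ico (0 : ℝ) 1 :=
    ⟨inv_nonneg.mpr (zero_le_one.trans (hX i).le), inv_lt_one_of_one_lt₀ (hX i)⟩
  have hfloor (i : ℕ) : ⌊X i⌋ = b i := by
    rw [hrec, Int.floor_intCast_add, Int.floor_eq_zero_iff.mpr (hfract i), add_zero]
  have hiter (i : ℕ) : gaussIter (X 0) i = X i := by
    induction i with
    | zero => rfl
    | succ i ih =>
      rw [gaussIter_succ, ih, hrec, Int.fract_intCast_add, Int.fract_eq_self.mpr (hfract i),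
        inv_inv]
  rw [cfTerm, hiter, hfloor]

end GaussMap

section Tails

variable {e e' : ℤˣ} {x y z : ℝ}

theorem TailRel.symm (h : TailRel e x y) : TailRel e y x := by
  obtain ⟨p, q, htail, hsign⟩ := h
  exact ⟨q, p, htail.symm, add_comm p q ▸ hsign⟩

theorem TailRel.trans (h : TailRel e x y) (h' : TailRel e' y z) : TailRel (e * e') x z := by
  obtain ⟨p, q, htail, rfl⟩ := h
  obtain ⟨p', q', htail', rfl⟩ := h'
  refine ⟨p + p', q' + q, ?_, ?_⟩
  · rw [gaussIter_add, htail, ← gaussIter_add, add_comm q, gaussIter_add, htail', ← gaussIter_add]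
  · rw [← pow_add]
    congr 1
    ring

theorem tailRel_add_intCast (x : ℝ) (n : ℤ) : TailRel 1 (x + n) x :=
  ⟨1, 1, by rw [gaussIter_one, gaussIter_one, Int.fract_add_intCast], by simp⟩

theorem tailRel_inv_of_one_lt (hx : 1 < x) : TailRel (-1) x⁻¹ x := by
  have hfract : Int.fract x⁻¹ = x⁻¹ := Int.fract_eq_self.mpr
    ⟨inv_nonneg.mpr (zero_le_one.trans hx.le), inv_lt_one_of_one_lt₀ hx⟩
  exact ⟨1, 0, by rw [gaussIter_one, hfract, inv_inv, gaussIter], by simp⟩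

theorem tailRel_one_sub_of_lt_half {t : ℝ} (hpos : 0 < t) (hlt : t < 1 / 2) :
    TailRel (-1) (1 - t) t := by
  have ht_inv : 2 < t⁻¹ := by rwa [lt_inv_comm₀ two_pos hpos, ← one_div]
  have hinv_sub : TailRel (-1) (1 - t) (1 - t)⁻¹ := by
    have hone_lt : 1 < (1 - t)⁻¹ := (one_lt_inv₀ (by linarith)).mpr (by linarith)
    simpa using tailRel_inv_of_one_lt hone_lt
  have hshift : TailRel 1 (1 - t)⁻¹ (t⁻¹ - 1)⁻¹ := by
    have hsub : 1 - t ≠ 0 := by linarith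
    have heq : (1 - t)⁻¹ = (t⁻¹ - 1)⁻¹ + (1 : ℤ) := by
      push_cast
      field_simp
      ring
    exact heq ▸ tailRel_add_intCast _ 1
  have hinv_inv_sub : TailRel (-1) (t⁻¹ - 1)⁻¹ (t⁻¹ - 1) := tailRel_inv_of_one_lt (by linarith)
  have hshift_inv : TailRel 1 (t⁻¹ - 1) t⁻¹ := by
    simpa [sub_eq_add_neg] using tailRel_add_intCast t⁻¹ (-1)
  have hinv : TailRel (-1) t⁻¹ t := by
    simpa using (tailRel_inv_of_one_lt (by linarith : 1 < t⁻¹)).symm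
  simpa using (((hinv_sub.trans hshift).trans hinv_inv_sub).trans hshift_inv).trans hinv

theorem tailRel_neg_of_fract_lt_half (hpos : 0 < Int.fract x) (hlt : Int.fract x < 1 / 2) :
    TailRel (-1) (-x) x := by
  have hneg : TailRel 1 (-x) (1 - Int.fract x) := by
    have heq : -x = 1 - Int.fract x + ((-⌊x⌋ - 1 : ℤ) : ℝ) := by
      push_cast
      linarith [Int.fract_add_floor x]
    exact heq ▸ tailRel_add_intCast (1 - Int.fract x) _
  have hfract : TailRel 1 (Int.fract x) x := by
    simpa using (tailRel_add_intCast (Int.fract x) ⌊x⌋).symm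
  simpa using (hneg.trans (tailRel_one_sub_of_lt_half hpos hlt)).trans hfract

theorem tailRel_neg (hx : Irrational x) : TailRel (-1) (-x) x := by
  have hpos := fract_pos_of_irrational hx
  have hfract_neg : Int.fract (-x) = 1 - Int.fract x := Int.fract_neg hpos.ne'
  have hne : Int.fract x ≠ 1 / 2 := by
    simpa using (hx.sub_intCast ⌊x⌋).ne_rat (1 / 2)
  rcases hne.lt_or_gt with hlt | hgt
  · exact tailRel_neg_of_fract_lt_half hpos hlt
  · have hlt_one := Int.fract_lt_one x
    have := tailRel_neg_of_fract_lt_half (x := -x) (by linarith) (by linarith)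
    rw [neg_neg] at this
    exact this.symm

theorem tailRel_inv_of_pos (hx : Irrational x) (hpos : 0 < x) : TailRel (-1) x⁻¹ x := by
  rcases hx.ne_one.lt_or_gt with hlt | hgt
  · simpa using (tailRel_inv_of_one_lt ((one_lt_inv₀ hpos).mpr hlt)).symm
  · exact tailRel_inv_of_one_lt hgt

theorem tailRel_inv (hx : Irrational x) : TailRel (-1) x⁻¹ x := by
  rcases hx.ne_zero.lt_or_gt with hneg | hpos
  · have hinv : TailRel (-1) (-x)⁻¹ (-x) := tailRel_inv_of_pos hx.neg (neg_pos.mpr hneg)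
    have hneg_inv : TailRel (-1) x⁻¹ (-x)⁻¹ := by
      rw [inv_neg]
      exact (tailRel_neg hx.inv).symm
    simpa using (hneg_inv.trans hinv).trans (tailRel_neg hx)
  · exact tailRel_inv_of_pos hx hpos

theorem tailRel_of_affine (hy : Irrational y) {a b d : ℤ} (hdet : a * d = e)
    (h : x * d = a * y + b) : TailRel e x y := by
  have hd : IsUnit d := isUnit_of_mul_isUnit_right (hdet ▸ e.isUnit)
  have hdd : (d : ℝ) * d = 1 := by exact_mod_cast Int.isUnit_mul_self hd
  have hdet' : (a : ℝ) * d = (e : ℤ) := by exact_mod_cast hdet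
  have hx : x = (e : ℤ) * y + ((b * d : ℤ) : ℝ) := by
    push_cast
    linear_combination d * h - x * hdd + y * hdet'
  have htranslate := tailRel_add_intCast ((e : ℤ) * y) (b * d)
  rw [← hx] at htranslate
  rcases Int.units_eq_one_or e with rfl | rfl
  · simpa using htranslate
  · simpa using htranslate.trans (by simpa using tailRel_neg hy)

theorem MobiusRel.tailRel (hx : Irrational x) (hy : Irrational y) (h : MobiusRel e x y) :
    TailRel e x y := by
  obtain ⟨a, b, c, d, hdet, h⟩ := h
  induction hn : c.natAbs using Nat.strong_induction_on generalizing a b c d e x with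
  | _ n ih =>
    by_cases hc : c = 0
    · subst hc
      exact tailRel_of_affine hy (by simpa using hdet) (by simpa using h)
    -- One step of the Euclidean algorithm on the first column `(a, c)` splits off a translation
    -- and an inversion.
    set q := a / c
    have hr : a % c = a - c * q := Int.emod_def a c
    have hr_lt : (a % c).natAbs < n := by
      have hlt := Int.emod_lt_abs a hc
      have hnonneg := Int.emod_nonneg a hc
      rw [Int.abs_eq_natAbs] at hlt
      omega
    have hxq : Irrational (x - q) := hx.sub_intCast q
    have hxq_ne : x - q ≠ 0 := hxq.ne_zero
    have hstep : (x - q) * (c * y + d) = (a % c : ℤ) * y + ((b - q * d : ℤ) : ℝ) := by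
      rw [hr]
      push_cast
      linear_combination h
    have hinv : TailRel (-e) (x - q)⁻¹ y := by
      refine ih _ hr_lt hxq.inv c d (a % c) (b - q * d) ?_ ?_ rfl
      · rw [hr, Units.val_neg, ← hdet]
        ring
      · rw [← hstep]
        field_simp
    have hadd : TailRel 1 x (x - q) := by simpa using tailRel_add_intCast (x - q) q
    simpa using (hadd.trans (tailRel_inv hxq).symm).trans hinv

end Tails

/-- Real numbers with rational sum and rational product. When one of them is irrational, this
says that they are the two roots of a quadratic polynomial over `ℚ`. -/
def IsRatConj (x y : ℝ) : Prop :=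
  (∃ s : ℚ, x + y = s) ∧ ∃ p : ℚ, x * y = p

section Conjugates

variable {x y z : ℝ}

theorem IsRatConj.irrational (h : IsRatConj x y) (hx : Irrational x) : Irrational y := by
  obtain ⟨⟨s, hs⟩, -⟩ := h
  exact eq_sub_of_add_eq' hs ▸ hx.ratCast_sub s

theorem IsRatConj.ne (h : IsRatConj x y) (hx : Irrational x) : x ≠ y := by
  rintro rfl
  obtain ⟨⟨s, hs⟩, -⟩ := h
  refine hx.ne_rat (s / 2) ?_
  push_cast
  linarith

theorem IsRatConj.right_unique (hx : Irrational x) (hy : IsRatConj x y) (hz : IsRatConj x z) :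
    y = z := by
  obtain ⟨⟨s, hs⟩, p, hp⟩ := hy
  obtain ⟨⟨s', hs'⟩, p', hp'⟩ := hz
  by_contra hne
  have hsub : y - z = s - s' := by linarith
  have hx_eq : x = (p - p') / (s - s') := by
    rw [eq_div_iff (hsub ▸ sub_ne_zero.mpr hne), ← hsub, ← hp, ← hp']
    ring
  exact hx.ne_rat ((p - p') / (s - s')) (by exact_mod_cast hx_eq)

theorem IsRatConj.sub_intCast (h : IsRatConj x y) (n : ℤ) : IsRatConj (x - n) (y - n) := by
  obtain ⟨⟨s, hs⟩, p, hp⟩ := h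
  refine ⟨⟨s - 2 * n, ?_⟩, p - n * s + n ^ 2, ?_⟩
  · push_cast
    linear_combination hs
  · push_cast
    linear_combination hp - n * hs

theorem IsRatConj.inv (h : IsRatConj x y) (hx : x ≠ 0) (hy : y ≠ 0) : IsRatConj x⁻¹ y⁻¹ := by
  obtain ⟨⟨s, hs⟩, p, hp⟩ := h
  refine ⟨⟨s / p, ?_⟩, p⁻¹, ?_⟩
  · push_cast
    rw [← hs, ← hp]
    field_simp
    ring
  · rw [Rat.cast_inv, ← hp, mul_inv]

end Conjugates

/-- The image of `y` under the Möbius transformations that carry `x` to its Gauss iterates. If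
`y` is the algebraic conjugate of `x`, these are the conjugates of the Gauss iterates. -/
noncomputable def gaussIterAlong (x y : ℝ) : ℕ → ℝ
  | 0 => y
  | n + 1 => (gaussIterAlong x y n - cfTerm x n)⁻¹

section Along

variable {x y : ℝ}

theorem gaussIterAlong_self (x : ℝ) (n : ℕ) : gaussIterAlong x x n = gaussIter x n := by
  induction n with
  | zero => rfl
  | succ n ih => rw [gaussIterAlong, ih, gaussIter, one_div, cfTerm]

theorem gaussIterAlong_eq_add_inv (x y : ℝ) (n : ℕ) :
    gaussIterAlong x y n = cfTerm x n + (gaussIterAlong x y (n + 1))⁻¹ := by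
  rw [gaussIterAlong, inv_inv, add_sub_cancel]

theorem irrational_gaussIterAlong (hy : Irrational y) (n : ℕ) :
    Irrational (gaussIterAlong x y n) := by
  induction n with
  | zero => exact hy
  | succ n ih => exact (ih.sub_intCast _).inv

theorem mobiusRel_gaussIterAlong (hy : Irrational y) (n : ℕ) :
    MobiusRel ((-1) ^ n) y (gaussIterAlong x y n) := by
  induction n with
  | zero => exact .refl y
  | succ n ih =>
    rw [pow_succ]
    exact ih.trans (mobiusRel_inv_sub_intCast ((irrational_gaussIterAlong hy n).ne_int _))

theorem mobiusRel_gaussIter (hx : Irrational x) (n : ℕ) :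
    MobiusRel ((-1) ^ n) x (gaussIter x n) :=
  gaussIterAlong_self x n ▸ mobiusRel_gaussIterAlong hx n

theorem mobiusRel_gaussIterAlong_iff {e : ℤˣ} (hx : Irrational x) (hy : Irrational y) (n : ℕ) :
    MobiusRel e (gaussIter x n) (gaussIterAlong x y n) ↔ MobiusRel e x y := by
  rw [(mobiusRel_gaussIter hx n).congr (mobiusRel_gaussIterAlong hy n), mul_comm _ e, mul_assoc,
    Int.units_mul_self, mul_one]

/-- Serret's theorem. -/
theorem mobiusRel_iff_tailRel {e : ℤˣ} (hx : Irrational x) (hy : Irrational y) :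
    MobiusRel e x y ↔ TailRel e x y := by
  refine ⟨fun h ↦ h.tailRel hx hy, ?_⟩
  rintro ⟨p, q, htail, rfl⟩
  rw [pow_add]
  exact (mobiusRel_gaussIter hx p).trans (htail ▸ (mobiusRel_gaussIter hy q).symm)

theorem gaussIterAlong_succ_neg {n : ℕ} (hterm : 0 ≤ cfTerm x n) (hneg : gaussIterAlong x y n < 0) :
    gaussIterAlong x y (n + 1) < 0 := by
  have : (0 : ℝ) ≤ cfTerm x n := by exact_mod_cast hterm
  exact inv_lt_zero.mpr (by linarith)

theorem exists_gaussIterAlong_succ_neg (hx : Irrational x) (hy : Irrational y) (hxy : x ≠ y) :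
    ∃ n, gaussIterAlong x y (n + 1) < 0 := by
  by_contra! hnonneg
  -- The recursion for `gaussIterAlong x y` is then the continued fraction expansion of `y`, whose
  -- terms are those of `x`.
  have hpos (n : ℕ) : 0 < gaussIterAlong x y (n + 1) :=
    (hnonneg n).lt_of_ne' (irrational_gaussIterAlong hy _).ne_zero
  have hone_lt (n : ℕ) : 1 < gaussIterAlong x y (n + 1) := by
    have hterm : (1 : ℝ) ≤ cfTerm x (n + 1) := by exact_mod_cast one_le_cfTerm_succ hx n
    rw [gaussIterAlong_eq_add_inv]
    linarith [inv_pos.mpr (hpos (n + 1))]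
  exact hxy (eq_of_cfTerm_eq fun n ↦
    (cfTerm_eq_of_recurrence (gaussIterAlong_eq_add_inv x y) hone_lt n).symm)

theorem eventually_gaussIterAlong_neg (hx : Irrational x) (hy : Irrational y) (hxy : x ≠ y) :
    ∀ᶠ n in Filter.atTop, gaussIterAlong x y n < 0 := by
  obtain ⟨N, hN⟩ := exists_gaussIterAlong_succ_neg hx hy hxy
  refine Filter.eventually_atTop.mpr ⟨N + 1, fun n hn ↦ ?_⟩
  induction n, hn using Nat.le_induction with
  | base => exact hN
  | succ n hn ih =>
    obtain ⟨m, rfl⟩ := Nat.exists_eq_succ_of_ne_zero (by omega : n ≠ 0)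
    exact gaussIterAlong_succ_neg (zero_le_one.trans (one_le_cfTerm_succ hx m)) ih

theorem isRatConj_gaussIterAlong (h : IsRatConj x y) (hx : Irrational x) (n : ℕ) :
    IsRatConj (gaussIter x n) (gaussIterAlong x y n) := by
  induction n with
  | zero => exact h
  | succ n ih =>
    have hiter := irrational_gaussIter hx n
    rw [gaussIter, one_div]
    exact (ih.sub_intCast _).inv (sub_ne_zero.mpr (hiter.ne_int _))
      (sub_ne_zero.mpr ((ih.irrational hiter).ne_int _))

end Along

section Galois

variable {x y : ℝ} {b : ℤ → ℤ} {l : ℕ}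

theorem gaussIter_periodic_of_cfTerm (hb : Function.Periodic b l)
    (hcf : ∀ j : ℕ, cfTerm x j = b j) : Function.Periodic (gaussIter x) l := fun n ↦ by
  refine gaussIter_eq_gaussIter_iff.mpr fun j ↦ ?_
  rw [hcf, hcf, ← hb (n + j : ℕ)]
  congr 1
  push_cast
  ring

theorem gaussIterAlong_periodic (h : IsRatConj x y) (hx : Irrational x)
    (hper : Function.Periodic (gaussIter x) l) : Function.Periodic (gaussIterAlong x y) l :=
  fun n ↦ (hper n ▸ isRatConj_gaussIterAlong h hx (n + l)).right_unique (irrational_gaussIter hx n)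
    (isRatConj_gaussIterAlong h hx n)

theorem one_le_of_cfTerm_eq (hx : Irrational x) (hl : 0 < l) (hb : Function.Periodic b l)
    (hcf : ∀ j : ℕ, cfTerm x j = b j) (j : ℕ) : 1 ≤ b j := by
  obtain ⟨m, rfl⟩ := Nat.exists_eq_succ_of_ne_zero hl.ne'
  rw [← hb, ← Nat.cast_add, ← hcf]
  exact one_le_cfTerm_succ hx (j + m)

/-- Galois' theorem: if `x` is reduced, with conjugate `y`, then `-y⁻¹` has the reversed period. -/
theorem IsRatConj.cfTerm_neg_inv (h : IsRatConj x y) (hx : Irrational x) (hy : y < 0)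
    (hl : 0 < l) (hb : Function.Periodic b l) (hcf : ∀ j : ℕ, cfTerm x j = b j) (j : ℕ) :
    cfTerm (-y⁻¹) j = b (-1 - j) := by
  have hb_one := one_le_of_cfTerm_eq hx hl hb hcf
  set φ : ℕ → ℝ := fun n ↦ -(gaussIterAlong x y n)⁻¹ with hφ
  have hφ_succ (n : ℕ) : φ (n + 1) = b n + (φ n)⁻¹ := by
    simp only [hφ, gaussIterAlong, hcf, inv_neg, inv_inv]
    ring
  have hφ_periodic : Function.Periodic φ l := fun n ↦ by
    simp only [hφ, gaussIterAlong_periodic h hx (gaussIter_periodic_of_cfTerm hb hcf) n]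
  have hφ_pos (n : ℕ) : 0 < φ n := by
    refine neg_pos.mpr (inv_lt_zero.mpr ?_)
    induction n with
    | zero => exact hy
    | succ n ih =>
      exact gaussIterAlong_succ_neg (hcf n ▸ zero_le_one.trans (hb_one n)) ih
  have hφ_one_lt (n : ℕ) : 1 < φ (n + 1) := by
    have : (1 : ℝ) ≤ b n := by exact_mod_cast hb_one n
    rw [hφ_succ]
    linarith [inv_pos.mpr (hφ_pos n)]
  obtain ⟨m, rfl⟩ := Nat.exists_eq_succ_of_ne_zero hl.ne'
  -- `m ≡ -1` modulo the period `m + 1`, so `i ↦ φ (m * i)` runs through `φ` backwards.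
  refine cfTerm_eq_of_recurrence (X := fun i ↦ φ (m * i)) (b := fun i ↦ b (-1 - i))
    (fun i ↦ ?_) (fun i ↦ ?_) j
  · have hindex : m * i + (m + 1) = m * (i + 1) + 1 := by ring
    have hb_eq : b (m * (i + 1) : ℕ) = b (-1 - i) := by
      rw [← hb.int_mul (i + 1) (-1 - i)]
      congr 1
      push_cast
      ring
    rw [← hφ_periodic, Nat.succ_eq_add_one, hindex, hφ_succ, hb_eq]
  · rw [← hφ_periodic]
    exact hφ_one_lt _

end Galois

/-- The reflection `i ↦ c - i` of `ℤ` is a symmetry of the bi-infinite sequence `b`. It exchanges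
even and odd indices exactly when `c` is odd. -/
def IsReflection {α : Type*} (b : ℤ → α) (c : ℤ) : Prop := ∀ i, b (c - i) = b i

section Reflections

variable {α : Type*} {b : ℤ → α} {c c' l : ℤ}

theorem IsReflection.add_int_mul (hb : Function.Periodic b l) (h : IsReflection b c) (z : ℤ) :
    IsReflection b (c + z * l) := fun i ↦ by
  rw [add_sub_right_comm, ← h i]
  exact hb.int_mul z (c - i)

theorem IsReflection.periodic_sub (h : IsReflection b c) (h' : IsReflection b c') :
    Function.Periodic b (c - c') := fun i ↦ by
  rw [← h, ← h' i]
  congr 1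
  ring

theorem isReflection_of_forall_natCast_lt (hl : 0 < l) (hb : Function.Periodic b l) (a : ℤ)
    (h : ∀ j : ℕ, (j : ℤ) < l → b (c - (a + j)) = b (a + j)) : IsReflection b c := fun i ↦ by
  set t := (i - a) / l
  have hj : (((i - a) % l).toNat : ℤ) = i - a - t * l := by
    rw [Int.toNat_of_nonneg (Int.emod_nonneg _ hl.ne'), Int.emod_def, mul_comm]
  have hj_lt : (((i - a) % l).toNat : ℤ) < l := by
    rw [Int.toNat_of_nonneg (Int.emod_nonneg _ hl.ne')]
    exact Int.emod_lt_of_pos _ hl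
  have hadd : b (c - i + t * l) = b (c - i) := hb.int_mul t _
  have hsub : b (i - t * l) = b i := hb.sub_int_mul_eq t
  have hi := h _ hj_lt
  rw [hj] at hi
  rw [← hadd, ← hsub]
  convert hi using 2 <;> ring

theorem negOnePow_natCast_sub (p q : ℕ) : ((p : ℤ) - q).negOnePow = (-1) ^ (p + q) := by
  rw [Int.negOnePow_sub, ← Int.negOnePow_add, Int.negOnePow_def, ← Nat.cast_add, zpow_natCast]

theorem exists_reversed_tail_iff_exists_isReflection (hl : 0 < l) (hb : Function.Periodic b l)
    {e : ℤˣ} : (∃ p q : ℕ, (∀ j : ℕ, b (p + j) = b (-1 - (q + j))) ∧ (-1) ^ (p + q) = e) ↔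
      ∃ c, IsReflection b c ∧ (c + 1).negOnePow = e := by
  constructor
  · rintro ⟨p, q, h, rfl⟩
    refine ⟨p - q - 1, isReflection_of_forall_natCast_lt hl hb p fun j _ ↦ ?_, ?_⟩
    · rw [h]
      congr 1
      ring
    · rw [sub_add_cancel, negOnePow_natCast_sub]
  · rintro ⟨c, h, rfl⟩
    have hc : ((c + 1).toNat : ℤ) - (-(c + 1)).toNat = c + 1 := Int.toNat_sub_toNat_neg _
    refine ⟨(c + 1).toNat, (-(c + 1)).toNat, fun j ↦ ?_, ?_⟩
    · rw [← h]
      congr 1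
      linarith
    · rw [← negOnePow_natCast_sub, hc]

end Reflections

/-- The bi-infinite sequence obtained by repeating `s`; it is constantly `0` if `s` is empty. -/
def cyclicExt (s : List ℤ) (i : ℤ) : ℤ := s.getD (i % s.length).toNat 0

section CyclicExt

variable {s : List ℤ} {x : ℝ}

theorem cyclicExt_periodic (s : List ℤ) : Function.Periodic (cyclicExt s) (s.length : ℤ) :=
  fun i ↦ by rw [cyclicExt, Int.add_emod_right, cyclicExt]

theorem cyclicExt_natCast (s : List ℤ) (j : ℕ) : cyclicExt s j = s.getD (j % s.length) 0 := by
  rw [cyclicExt, ← Int.natCast_emod, Int.toNat_natCast]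

theorem getElem_rotate_eq_cyclicExt (n i : ℕ) (hi : i < (s.rotate n).length) :
    (s.rotate n)[i] = cyclicExt s (i + n) := by
  rw [List.getElem_rotate, ← Nat.cast_add, cyclicExt_natCast, List.getD_eq_getElem]

theorem reverse_rotate_eq_iff_isReflection (hs : s ≠ []) (n : ℕ) :
    (s.rotate n).reverse = s.rotate n ↔ IsReflection (cyclicExt s) (2 * n - 1) := by
  have hpos : 0 < (s.length : ℤ) := by exact_mod_cast List.length_pos_iff.mpr hs
  have hreverse (i : ℕ) (hi : i < (s.rotate n).reverse.length) :
      (s.rotate n).reverse[i] = cyclicExt s (2 * n - 1 - (i + n)) := by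
    rw [List.getElem_reverse, getElem_rotate_eq_cyclicExt, ← cyclicExt_periodic s (_ - _)]
    congr 1
    simp only [List.length_reverse, List.length_rotate] at hi ⊢
    omega
  constructor
  · intro h
    refine isReflection_of_forall_natCast_lt hpos (cyclicExt_periodic s) n fun j hj ↦ ?_
    have hj' : j < (s.rotate n).length := by
      rw [List.length_rotate]
      exact_mod_cast hj
    rw [add_comm (n : ℤ), ← hreverse j (by rwa [List.length_reverse]),
      ← getElem_rotate_eq_cyclicExt n j hj']
    simp only [h]
  · intro h
    refine List.ext_getElem (by simp) fun i hi hi' ↦ ?_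
    rw [hreverse, getElem_rotate_eq_cyclicExt, h]

theorem palindromic_iff_exists_isReflection (hs : s ≠ []) :
    Palindromic s ↔ ∃ c, IsReflection (cyclicExt s) c ∧ Odd c := by
  have hlen : (s.length : ℤ) ≠ 0 := by simpa using hs
  constructor
  · rintro ⟨_, ⟨n, rfl⟩, h⟩
    exact ⟨2 * n - 1, (reverse_rotate_eq_iff_isReflection hs n).mp h, n - 1, by ring⟩
  · rintro ⟨_, h, t, rfl⟩
    refine ⟨_, ⟨((t + 1) % s.length).toNat, rfl⟩,
      (reverse_rotate_eq_iff_isReflection hs _).mpr ?_⟩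
    convert h.add_int_mul (cyclicExt_periodic s) (-2 * ((t + 1) / s.length)) using 1
    rw [Int.toNat_of_nonneg (Int.emod_nonneg _ hlen), Int.emod_def]
    ring

theorem IsCFPeriod.length_dvd (h : IsCFPeriod s x) {w : ℤ}
    (hw : Function.Periodic (cyclicExt s) w) : (s.length : ℤ) ∣ w := by
  obtain ⟨hs, ⟨N, hN⟩, hmin⟩ := h
  have hpos : 0 < (s.length : ℤ) := by exact_mod_cast List.length_pos_iff.mpr hs
  have hr_nonneg := Int.emod_nonneg w hpos.ne'
  have hr : Function.Periodic (cyclicExt s) (w % s.length) := by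
    rw [Int.emod_def, mul_comm]
    exact hw.sub_period ((cyclicExt_periodic s).int_mul _)
  by_contra hdvd
  have hr_ne : w % s.length ≠ 0 := fun h0 ↦ hdvd (Int.dvd_of_emod_eq_zero h0)
  have hone_le : 1 ≤ (w % s.length).toNat := by omega
  have hle : s.length ≤ (w % s.length).toNat := by
    refine hmin _ hone_le ⟨N, hone_le, fun j ↦ ?_⟩
    rw [add_assoc, hN, hN, ← cyclicExt_natCast, ← cyclicExt_natCast, Nat.cast_add,
      Int.toNat_of_nonneg hr_nonneg, hr]
  have hr_lt := Int.emod_lt_of_pos w hpos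
  omega

theorem IsCFPeriod.even_length_iff (h : IsCFPeriod s x)
    (hodd : ∃ c, IsReflection (cyclicExt s) c ∧ Odd c) :
    Even s.length ↔ ¬ ∃ c, IsReflection (cyclicExt s) c ∧ Even c := by
  obtain ⟨c, hc, hc_odd⟩ := hodd
  constructor
  · rintro hlen ⟨c', hc', hc'_even⟩
    have hdvd : (2 : ℤ) ∣ c - c' :=
      (even_iff_two_dvd.mp ((Int.even_coe_nat _).mpr hlen)).trans
        (h.length_dvd (hc.periodic_sub hc'))
    exact Int.not_even_iff_odd.mpr (hc_odd.sub_even hc'_even) (even_iff_two_dvd.mpr hdvd)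
  · intro hnone
    by_contra hlen
    have hlen_odd : Odd (s.length : ℤ) := (Int.odd_coe_nat _).mpr (Nat.not_even_iff_odd.mp hlen)
    refine hnone ⟨c + 1 * s.length, hc.add_int_mul (cyclicExt_periodic s) 1, ?_⟩
    rw [one_mul]
    exact hc_odd.add_odd hlen_odd

theorem mobiusRel_iff_exists_isReflection {y : ℝ} (hx : Irrational x) (h : IsRatConj x y)
    (hs : s ≠ []) (hper : ∃ N : ℕ, ∀ j : ℕ, cfTerm x (N + j) = s.getD (j % s.length) 0)
    {e : ℤˣ} :
    MobiusRel e x y ↔ ∃ c, IsReflection (cyclicExt s) c ∧ (c + 1).negOnePow = e := by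
  obtain ⟨N₀, hN₀⟩ := hper
  have hy := h.irrational hx
  have hpos : 0 < s.length := List.length_pos_iff.mpr hs
  obtain ⟨N₁, hneg⟩ := Filter.eventually_atTop.mp (eventually_gaussIterAlong_neg hx hy (h.ne hx))
  -- A multiple of the period later the phase of `s` is the same and the conjugate is negative.
  set N := N₀ + s.length * N₁
  set x' := gaussIter x N
  set y' := gaussIterAlong x y N
  have hx' : Irrational x' := irrational_gaussIter hx N
  have hxy' : IsRatConj x' y' := isRatConj_gaussIterAlong h hx N
  have hy' : Irrational y' := hxy'.irrational hx'
  have hy'_neg : y' < 0 := hneg N ((Nat.le_mul_of_pos_left N₁ hpos).trans (Nat.le_add_left _ _))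
  have hcf_x' (j : ℕ) : cfTerm x' j = cyclicExt s j := by
    rw [cfTerm_gaussIter, add_assoc, hN₀, Nat.mul_add_mod, cyclicExt_natCast]
  have hcf_y' (j : ℕ) : cfTerm (-y'⁻¹) j = cyclicExt s (-1 - j) :=
    hxy'.cfTerm_neg_inv hx' hy'_neg hpos (cyclicExt_periodic s) hcf_x' j
  have hneg_inv : MobiusRel e x' y' ↔ MobiusRel e x' (-y'⁻¹) := by
    simpa using (MobiusRel.refl x').congr (mobiusRel_neg_inv hy'_neg.ne)
  rw [← mobiusRel_gaussIterAlong_iff hx hy N, hneg_inv, mobiusRel_iff_tailRel hx' hy'.inv.neg,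
    ← exists_reversed_tail_iff_exists_isReflection (by exact_mod_cast hpos) (cyclicExt_periodic s)]
  simp only [TailRel, gaussIter_eq_gaussIter_iff, hcf_x', hcf_y', Nat.cast_add]

end CyclicExt

section Forms

variable {f g : ℤ × ℤ × ℤ}

theorem form_ext (h : ∀ x y, qval f x y = qval g x y) : f = g := by
  obtain ⟨m, n, k⟩ := f
  obtain ⟨m', n', k'⟩ := g
  have h₁₀ := h 1 0
  have h₀₁ := h 0 1
  have h₁₁ := h 1 1
  simp only [qval] at h₁₀ h₀₁ h₁₁
  ext <;> dsimp only <;> linarith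

/-- The form `f (a * x + b * y, c * x + d * y)`. -/
def substForm (f : ℤ × ℤ × ℤ) (a b c d : ℤ) : ℤ × ℤ × ℤ :=
  (qval f a c, qval f b d, 2 * f.1 * a * b + 2 * f.2.1 * c * d + f.2.2 * (a * d + b * c))

theorem qval_substForm (f : ℤ × ℤ × ℤ) (a b c d x y : ℤ) :
    qval (substForm f a b c d) x y = qval f (a * x + b * y) (c * x + d * y) := by
  simp only [qval, substForm]
  ring

theorem formDisc_substForm (f : ℤ × ℤ × ℤ) (a b c d : ℤ) :
    formDisc (substForm f a b c d) = (a * d - b * c) ^ 2 * formDisc f := by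
  simp only [formDisc, substForm, qval]
  ring

theorem slEquiv_iff_exists_substForm :
    SLEquiv f g ↔ ∃ a b c d : ℤ, a * d - b * c = 1 ∧ g = substForm f a b c d := by
  refine exists₄_congr fun a b c d ↦ and_congr_right fun _ ↦ ⟨fun h ↦ form_ext fun x y ↦ ?_, ?_⟩
  · rw [h, qval_substForm]
  · rintro rfl x y
    exact qval_substForm f a b c d x y

theorem formDisc_adjF (f : ℤ × ℤ × ℤ) : formDisc (adjF f) = formDisc f := by
  simp only [formDisc, adjF]
  ring

theorem formDisc_conjF (f : ℤ × ℤ × ℤ) : formDisc (conjF f) = formDisc f := by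
  simp only [formDisc, conjF, neg_sq]

theorem fst_ne_zero_of_irrational (hf : Irrational √(formDisc f)) : f.1 ≠ 0 := fun h0 ↦
  (irrational_sqrt_intCast_iff.mp hf).1 ⟨f.2.2, by rw [formDisc, h0]; ring⟩

theorem snd_ne_zero_of_irrational (hf : Irrational √(formDisc f)) : f.2.1 ≠ 0 := fun h0 ↦
  (irrational_sqrt_intCast_iff.mp hf).1 ⟨f.2.2, by rw [formDisc, h0]; ring⟩

theorem sqrt_formDisc_sq (hf : Irrational √(formDisc f)) :
    √(formDisc f) ^ 2 = f.2.2 ^ 2 - 4 * f.1 * f.2.1 := by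
  rw [Real.sq_sqrt (by exact_mod_cast (irrational_sqrt_intCast_iff.mp hf).2), formDisc]
  push_cast
  ring

theorem irrational_xiPlus (hf : Irrational √(formDisc f)) : Irrational (xiPlus f) := by
  have := (hf.intCast_add (-f.2.2)).div_intCast
    (mul_ne_zero two_ne_zero (fst_ne_zero_of_irrational hf))
  push_cast at this
  exact this

theorem xiPlus_add_xiMinus (hf : f.1 ≠ 0) : xiPlus f + xiMinus f = -f.2.2 / f.1 := by
  have : (f.1 : ℝ) ≠ 0 := by exact_mod_cast hf
  rw [xiPlus, xiMinus]
  field_simp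
  ring

theorem xiPlus_mul_xiMinus (hf : Irrational √(formDisc f)) :
    xiPlus f * xiMinus f = f.2.1 / f.1 := by
  have : (f.1 : ℝ) ≠ 0 := by exact_mod_cast fst_ne_zero_of_irrational hf
  rw [xiPlus, xiMinus]
  field_simp
  linear_combination -sqrt_formDisc_sq hf

theorem isRatConj_xiPlus_xiMinus (hf : Irrational √(formDisc f)) :
    IsRatConj (xiPlus f) (xiMinus f) := by
  refine ⟨⟨-f.2.2 / f.1, ?_⟩, f.2.1 / f.1, ?_⟩
  · rw [xiPlus_add_xiMinus (fst_ne_zero_of_irrational hf)]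
    push_cast
    rfl
  · rw [xiPlus_mul_xiMinus hf]
    push_cast
    rfl

theorem irrational_xiMinus (hf : Irrational √(formDisc f)) : Irrational (xiMinus f) :=
  (isRatConj_xiPlus_xiMinus hf).irrational (irrational_xiPlus hf)

theorem xiPlus_conjF (f : ℤ × ℤ × ℤ) : xiPlus (conjF f) = -xiMinus f := by
  rw [xiPlus, xiMinus, formDisc_conjF, conjF]
  push_cast
  ring

theorem xiPlus_adjF (hf : Irrational √(formDisc f)) : xiPlus (adjF f) = -(xiMinus f)⁻¹ := by
  have hm : (f.1 : ℝ) ≠ 0 := by exact_mod_cast fst_ne_zero_of_irrational hf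
  have hn : (f.2.1 : ℝ) ≠ 0 := by exact_mod_cast snd_ne_zero_of_irrational hf
  rw [neg_inv]
  refine eq_inv_of_mul_eq_one_left ?_
  rw [xiPlus, xiMinus, formDisc_adjF, adjF]
  push_cast
  field_simp
  linear_combination -sqrt_formDisc_sq hf

theorem form_eq_of_xiPlus_eq (hf : Irrational √(formDisc f)) (hdisc : formDisc g = formDisc f)
    (hxi : xiPlus f = xiPlus g) : f = g := by
  have hm : f.1 ≠ 0 := fst_ne_zero_of_irrational hf
  have hm' : g.1 ≠ 0 := fst_ne_zero_of_irrational (hdisc ▸ hf)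
  have hmR : (f.1 : ℝ) ≠ 0 := by exact_mod_cast hm
  have hmR' : (g.1 : ℝ) ≠ 0 := by exact_mod_cast hm'
  have hlin : √(formDisc f) * (g.1 - f.1) = f.2.2 * g.1 - g.2.2 * f.1 := by
    rw [xiPlus, xiPlus, hdisc] at hxi
    field_simp at hxi
    linear_combination hxi
  have hfst : f.1 = g.1 := by
    by_contra hne
    have hsub : (g.1 - f.1 : ℝ) ≠ 0 := sub_ne_zero.mpr (by exact_mod_cast Ne.symm hne)
    refine hf.ne_rat ((f.2.2 * g.1 - g.2.2 * f.1) / (g.1 - f.1)) ?_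
    push_cast
    rwa [eq_div_iff hsub]
  have hthird : f.2.2 = g.2.2 := by
    rw [hfst, sub_self, mul_zero, ← sub_mul, eq_comm, mul_eq_zero, or_iff_left hmR'] at hlin
    exact_mod_cast sub_eq_zero.mp hlin
  have hsecond : f.2.1 = g.2.1 := by
    rw [formDisc, formDisc, hfst, hthird] at hdisc
    exact mul_left_cancel₀ hm' (by linarith)
  exact Prod.ext hfst (Prod.ext hsecond hthird)

theorem xiPlus_substForm (hf : Irrational √(formDisc f)) {a b c d : ℤ}
    (hdet : a * d - b * c = 1) :
    xiPlus f * (c * xiPlus (substForm f a b c d) + d) = a * xiPlus (substForm f a b c d) + b := by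
  have hdisc : formDisc (substForm f a b c d) = formDisc f := by
    rw [formDisc_substForm, hdet, one_pow, one_mul]
  have hm : (f.1 : ℝ) ≠ 0 := by exact_mod_cast fst_ne_zero_of_irrational hf
  have hm' : ((substForm f a b c d).1 : ℝ) ≠ 0 := by
    exact_mod_cast fst_ne_zero_of_irrational (hdisc ▸ hf)
  have hdetR : (a * d - b * c : ℝ) = 1 := by exact_mod_cast hdet
  have hsq := sqrt_formDisc_sq hf
  rw [xiPlus, xiPlus, hdisc]
  field_simp
  simp only [substForm, qval]
  push_cast
  linear_combination c * hsq +
    (√(formDisc f) * (2 * f.1 * a + f.2.2 * c) - c * (f.2.2 ^ 2 - 4 * f.1 * f.2.1)) * hdetR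

theorem eq_of_mobius_eq {x y z : ℝ} {a b c d : ℤ} (hdet : a * d - b * c = 1)
    (hy : x * (c * y + d) = a * y + b) (hz : x * (c * z + d) = a * z + b) : y = z := by
  have hdetR : (a * d - b * c : ℝ) = 1 := by exact_mod_cast hdet
  linear_combination (z - y) * hdetR - (c * z + d) * hy + (c * y + d) * hz

theorem slEquiv_iff_mobiusRel_xiPlus (hf : Irrational √(formDisc f))
    (hdisc : formDisc g = formDisc f) :
    SLEquiv f g ↔ MobiusRel 1 (xiPlus f) (xiPlus g) := by
  rw [slEquiv_iff_exists_substForm]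
  refine exists₄_congr fun a b c d ↦ and_congr_right fun hdet ↦ ⟨?_, fun hg ↦ ?_⟩
  · rintro rfl
    exact xiPlus_substForm hf hdet
  · have hdisc' : formDisc (substForm f a b c d) = formDisc g := by
      rw [formDisc_substForm, hdet, one_pow, one_mul, hdisc]
    exact form_eq_of_xiPlus_eq (hdisc ▸ hf) hdisc'
      (eq_of_mobius_eq hdet hg (xiPlus_substForm hf hdet))

theorem slEquiv_adjF_iff (hf : Irrational √(formDisc f)) :
    SLEquiv f (adjF f) ↔ MobiusRel 1 (xiPlus f) (xiMinus f) := by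
  rw [slEquiv_iff_mobiusRel_xiPlus hf (formDisc_adjF f), xiPlus_adjF hf,
    (MobiusRel.refl (xiPlus f)).congr (mobiusRel_neg_inv (irrational_xiMinus hf).ne_zero),
    one_mul, mul_one]

theorem slEquiv_conjF_iff (hf : Irrational √(formDisc f)) :
    SLEquiv f (conjF f) ↔ MobiusRel (-1) (xiPlus f) (xiMinus f) := by
  rw [slEquiv_iff_mobiusRel_xiPlus hf (formDisc_conjF f), xiPlus_conjF,
    (MobiusRel.refl (xiPlus f)).congr (mobiusRel_neg (xiMinus f)), one_mul, mul_neg_one,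
    neg_neg]

theorem IsCFPeriod.mobiusRel_xiMinus_iff {s : List ℤ} (hs : IsCFPeriod s (xiPlus f))
    (hf : Irrational √(formDisc f)) {e : ℤˣ} :
    MobiusRel e (xiPlus f) (xiMinus f) ↔
      ∃ c, IsReflection (cyclicExt s) c ∧ (c + 1).negOnePow = e :=
  mobiusRel_iff_exists_isReflection (irrational_xiPlus hf) (isRatConj_xiPlus_xiMinus hf) hs.1 hs.2.1

theorem IsCFPeriod.slEquiv_adjF_iff_palindromic {s : List ℤ} (hs : IsCFPeriod s (xiPlus f))
    (hf : Irrational √(formDisc f)) : SLEquiv f (adjF f) ↔ Palindromic s := by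
  rw [slEquiv_adjF_iff hf, hs.mobiusRel_xiMinus_iff hf, palindromic_iff_exists_isReflection hs.1]
  simp only [Int.negOnePow_eq_one_iff, Int.even_add_one, Int.not_even_iff_odd]

theorem IsCFPeriod.slEquiv_conjF_iff_exists_isReflection {s : List ℤ}
    (hs : IsCFPeriod s (xiPlus f)) (hf : Irrational √(formDisc f)) :
    SLEquiv f (conjF f) ↔ ∃ c, IsReflection (cyclicExt s) c ∧ Even c := by
  rw [slEquiv_conjF_iff hf, hs.mobiusRel_xiMinus_iff hf]
  simp only [Int.negOnePow_eq_neg_one_iff, ← Int.not_even_iff_odd, Int.even_add_one, not_not]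

end Forms

/-- The period `Γ(m,n,k)` is palindromic and even iff the class `C(m,n,k)` is
`(m+n)`-symmetric. -/
theorem statement4 (m n k : ℤ)
    (hpos : 0 < formDisc (m, n, k)) (hsq : ¬ IsSquare (formDisc (m, n, k))) :
    ∀ s : List ℤ, IsCFPeriod s (xiPlus (m, n, k)) →
      ((Palindromic s ∧ Even s.length) ↔
        (SLEquiv (m, n, k) (adjF (m, n, k)) ∧ ¬ SLEquiv (m, n, k) (conjF (m, n, k)))) := by
  intro s hs
  have hf : Irrational √(formDisc (m, n, k)) := irrational_sqrt_intCast_iff.mpr ⟨hsq, hpos.le⟩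
  rw [hs.slEquiv_adjF_iff_palindromic hf, hs.slEquiv_conjF_iff_exists_isReflection hf]
  exact and_congr_right fun hpal ↦
    hs.even_length_iff ((palindromic_iff_exists_isReflection hs.1).mp hpal)
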